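/- arXiv:1210.6917 — 2 statements merged into one kernel-verified Lean document; each statement's English description precedes it below -/
import Mathlib

section
/- Let K ≥ 1 and let A be a nonempty subset of F_2^n satisfying |A + A| ≤ K·|A|. Then for every real ε > 0, every positive integer t, and every set B ⊆ F_2^n there exists a set X ⊆ F_2^n with the following properties: (1) X is contained in an affine shift of A, i.e. there exists c ∈ F_2^n with X ⊆ c + A; (2) |X| ≥ |A|/(2·K^{t−1}); (3) for every x ∈ X and every nonempty subset S ⊆ F_2^n, Pr_{y∈S}[ |ρ_{A→B}(y) − ρ_{A→B}(y + x)| ≤ 2ε ] ≥ 1 − 8·(|A+B|/|S|)·exp(−2ε²t). -/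
open scoped Classical Pointwise

/-- The measure of additive containment: `ρ_{A→B}(y) = |{a ∈ A : y + a ∈ B}| / |A|`. -/
noncomputable def rhoMeas {n : ℕ} (A B : Finset (Fin n → ZMod 2)) (y : Fin n → ZMod 2) : ℝ :=
  ((A.filter fun a => y + a ∈ B).card : ℝ) / A.card

/-- `Pr_{y ∈ S}[P y] = |{y ∈ S : P y}| / |S|`. -/
noncomputable def prOver {n : ℕ} (S : Finset (Fin n → ZMod 2))
    (P : (Fin n → ZMod 2) → Prop) : ℝ :=
  ((S.filter fun y => P y).card : ℝ) / S.card

lemma ap_add_self {n : ℕ} (x : Fin n → ZMod 2) : x + x = 0 := by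
  funext i
  exact CharTwo.add_self_eq_zero (x i)

open MeasureTheory ProbabilityTheory in
lemma ap_bernoulli (p : ℝ) (hp0 : 0 ≤ p) (hp1 : p ≤ 1) (s : ℝ) :
    p * Real.exp (s * (1 - p)) + (1 - p) * Real.exp (s * (0 - p)) ≤ Real.exp (s ^ 2 / 8) := by
  let μ : Measure ℝ := ENNReal.ofReal p • Measure.dirac 1 + ENNReal.ofReal (1 - p) • Measure.dirac 0
  have hμ : IsProbabilityMeasure μ := by
    constructor
    simp only [μ, Measure.add_apply, Measure.smul_apply, measure_univ, smul_eq_mul, mul_one]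
    rw [← ENNReal.ofReal_add hp0 (by linarith)]
    simp
  have hint : ∀ f : ℝ → ℝ, ∫ x, f x ∂μ = p * f 1 + (1 - p) * f 0 := by
    intro f
    have h1 : Integrable f (ENNReal.ofReal p • Measure.dirac 1) :=
      (integrable_dirac (by simp)).smul_measure (by simp)
    have h2 : Integrable f (ENNReal.ofReal (1 - p) • Measure.dirac 0) :=
      (integrable_dirac (by simp)).smul_measure (by simp)
    rw [integral_add_measure h1 h2, integral_smul_measure, integral_smul_measure,
      integral_dirac, integral_dirac, ENNReal.toReal_ofReal hp0,
      ENNReal.toReal_ofReal (by linarith)]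
    simp
  have hb : ∀ᵐ x ∂μ, (fun x : ℝ => x) x ∈ Set.Icc (0 : ℝ) 1 := by
    rw [ae_add_measure_iff]
    constructor
    · apply Measure.ae_smul_measure
      exact (ae_dirac_iff (p := fun x : ℝ => x ∈ Set.Icc (0:ℝ) 1) measurableSet_Icc).2 (by simp)
    · apply Measure.ae_smul_measure
      exact (ae_dirac_iff (p := fun x : ℝ => x ∈ Set.Icc (0:ℝ) 1) measurableSet_Icc).2 (by simp)
  have h := (hasSubgaussianMGF_of_mem_Icc (μ := μ) (X := fun x : ℝ => x) aemeasurable_id hb).mgf_le s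
  rw [mgf, hint, hint] at h
  have e : ((‖(1:ℝ) - 0‖₊ / 2) ^ 2 : NNReal) * s ^ 2 / 2 = s ^ 2 / 8 := by
    push_cast; simp; ring
  rw [e] at h
  simpa using h

section
variable {n : ℕ}

noncomputable def apF (A B : Finset (Fin n → ZMod 2)) (y a : Fin n → ZMod 2) : ℝ :=
  (if y + a ∈ B then 1 else 0) - rhoMeas A B y

lemma ap_mgf (A B : Finset (Fin n → ZMod 2)) (hA : A.Nonempty) (y : Fin n → ZMod 2) (s : ℝ) :
    ∑ a ∈ A, Real.exp (s * apF A B y a) ≤ A.card * Real.exp (s ^ 2 / 8) := by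
  have hc : (0:ℝ) < A.card := by exact_mod_cast hA.card_pos
  set p := rhoMeas A B y with hp
  have hp' : ((A.filter fun a => y + a ∈ B).card : ℝ) = A.card * p := by
    rw [hp, rhoMeas]; field_simp
  have hsum := Finset.card_filter_add_card_filter_not (s := A) (fun a => y + a ∈ B)
  have hsum' : ((A.filter fun a => y + a ∈ B).card : ℝ) + (A.filter fun a => ¬ y + a ∈ B).card
      = A.card := by exact_mod_cast hsum
  have h0 : 0 ≤ p := by rw [hp, rhoMeas]; positivity
  have h1 : p ≤ 1 := by
    rw [hp, rhoMeas, div_le_one hc]; exact_mod_cast Finset.card_filter_le _ _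
  have hb := ap_bernoulli p h0 h1 s
  rw [← Finset.sum_filter_add_sum_filter_not A (fun a => y + a ∈ B)]
  have e1 : ∑ a ∈ A with y + a ∈ B, Real.exp (s * apF A B y a)
      = (A.filter fun a => y + a ∈ B).card * Real.exp (s * (1 - p)) := by
    rw [← nsmul_eq_mul, ← Finset.sum_const]
    apply Finset.sum_congr rfl
    intro a ha
    simp [apF, (Finset.mem_filter.1 ha).2, hp]
  have e2 : ∑ a ∈ A with ¬ y + a ∈ B, Real.exp (s * apF A B y a)
      = (A.filter fun a => ¬ y + a ∈ B).card * Real.exp (s * (0 - p)) := by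
    rw [← nsmul_eq_mul, ← Finset.sum_const]
    apply Finset.sum_congr rfl
    intro a ha
    simp [apF, (Finset.mem_filter.1 ha).2, hp]
  rw [e1, e2]
  have : ((A.filter fun a => ¬ y + a ∈ B).card : ℝ) = A.card * (1 - p) := by linarith
  rw [this, hp']
  nlinarith [mul_le_mul_of_nonneg_left hb hc.le]

noncomputable def apDev (A B : Finset (Fin n → ZMod 2)) {t : ℕ} (g : Fin t → Fin n → ZMod 2)
    (y : Fin n → ZMod 2) : ℝ := ∑ i, apF A B y (g i)

lemma ap_tail (A B : Finset (Fin n → ZMod 2)) (hA : A.Nonempty) (t : ℕ) (y : Fin n → ZMod 2)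
    (ε : ℝ) (s : ℝ) (hs : s ^ 2 = 16 * ε ^ 2) :
    (((Fintype.piFinset (fun _ : Fin t => A)).filter
      fun g => 4 * ε ^ 2 * t < s * apDev A B g y).card : ℝ)
      ≤ A.card ^ t * Real.exp (-2 * ε ^ 2 * t) := by
  set T := Fintype.piFinset (fun _ : Fin t => A)
  have h1 : ∑ g ∈ T, Real.exp (s * apDev A B g y) ≤ (A.card * Real.exp (s ^ 2 / 8)) ^ t := by
    have : ∑ g ∈ T, Real.exp (s * apDev A B g y)
        = ∏ _i : Fin t, ∑ a ∈ A, Real.exp (s * apF A B y a) := by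
      rw [Finset.prod_univ_sum]
      apply Finset.sum_congr rfl
      intro g _
      rw [apDev, Finset.mul_sum, Real.exp_sum]
    rw [this, Finset.prod_const, Finset.card_univ, Fintype.card_fin]
    exact pow_le_pow_left₀ (Finset.sum_nonneg fun _ _ => (Real.exp_pos _).le) (ap_mgf A B hA y s) t
  have h2 : ((T.filter fun g => 4 * ε ^ 2 * t < s * apDev A B g y).card : ℝ)
      * Real.exp (4 * ε ^ 2 * t) ≤ ∑ g ∈ T, Real.exp (s * apDev A B g y) := by
    rw [← nsmul_eq_mul, ← Finset.sum_const]
    refine le_trans (Finset.sum_le_sum (g := fun g => Real.exp (s * apDev A B g y)) ?_)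
      (Finset.sum_le_sum_of_subset_of_nonneg (Finset.filter_subset _ _)
        fun _ _ _ => (Real.exp_pos _).le)
    intro g hg
    exact Real.exp_le_exp.2 (Finset.mem_filter.1 hg).2.le
  have h3 := h2.trans h1
  have e : ((A.card : ℝ) * Real.exp (s ^ 2 / 8)) ^ t
      = (A.card ^ t * Real.exp (-2 * ε ^ 2 * t)) * Real.exp (4 * ε ^ 2 * t) := by
    rw [mul_pow, ← Real.exp_nat_mul, mul_assoc, ← Real.exp_add, hs]
    congr 2; ring
  rw [e] at h3
  exact le_of_mul_le_mul_right h3 (Real.exp_pos _)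

noncomputable def apBad (A B : Finset (Fin n → ZMod 2)) (ε : ℝ) {t : ℕ}
    (g : Fin t → Fin n → ZMod 2) : Finset (Fin n → ZMod 2) :=
  Finset.univ.filter fun y => t * ε < |apDev A B g y|

lemma ap_tail2 (A B : Finset (Fin n → ZMod 2)) (hA : A.Nonempty) (t : ℕ) (y : Fin n → ZMod 2)
    (ε : ℝ) (hε : 0 < ε) :
    (((Fintype.piFinset (fun _ : Fin t => A)).filter fun g => y ∈ apBad A B ε g).card : ℝ)
      ≤ 2 * (A.card ^ t * Real.exp (-2 * ε ^ 2 * t)) := by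
  have h1 := ap_tail A B hA t y ε (4 * ε) (by ring)
  have h2 := ap_tail A B hA t y ε (-(4 * ε)) (by ring)
  set T := Fintype.piFinset (fun _ : Fin t => A)
  have hsub : (T.filter fun g => y ∈ apBad A B ε g) ⊆
      (T.filter fun g => 4 * ε ^ 2 * t < (4 * ε) * apDev A B g y) ∪
      (T.filter fun g => 4 * ε ^ 2 * t < (-(4 * ε)) * apDev A B g y) := by
    intro g hg
    simp only [Finset.mem_filter, apBad, Finset.mem_univ, true_and] at hg
    simp only [Finset.mem_union, Finset.mem_filter]
    rcases lt_abs.1 hg.2 with h | h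
    · left; exact ⟨hg.1, by nlinarith⟩
    · right; exact ⟨hg.1, by nlinarith⟩
  have := (Finset.card_le_card hsub).trans (Finset.card_union_le _ _)
  have : ((T.filter fun g => y ∈ apBad A B ε g).card : ℝ) ≤
      (T.filter fun g => 4 * ε ^ 2 * t < (4 * ε) * apDev A B g y).card +
      (T.filter fun g => 4 * ε ^ 2 * t < (-(4 * ε)) * apDev A B g y).card := by exact_mod_cast this
  linarith

lemma ap_bad_subset (A B : Finset (Fin n → ZMod 2)) (ε : ℝ) (hε : 0 < ε) {t : ℕ}
    (g : Fin t → Fin n → ZMod 2) (hg : ∀ i, g i ∈ A) : apBad A B ε g ⊆ A + B := by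
  intro y hy
  by_contra hn
  have hnot : ∀ a ∈ A, y + a ∉ B := by
    intro a ha hb
    apply hn
    rw [Finset.mem_add]
    refine ⟨a, ha, _, hb, ?_⟩
    rw [add_comm y a, ← add_assoc, ap_add_self, zero_add]
  have hr : rhoMeas A B y = 0 := by
    rw [rhoMeas, Finset.filter_false_of_mem hnot]; simp
  have hd : apDev A B g y = 0 := by
    apply Finset.sum_eq_zero
    intro i _
    simp [apF, hr, hnot _ (hg i)]
  simp only [apBad, Finset.mem_filter, hd, abs_zero] at hy
  have : (0:ℝ) ≤ t * ε := by positivity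
  linarith [hy.2]

lemma ap_good (A B : Finset (Fin n → ZMod 2)) (hA : A.Nonempty) (t : ℕ) (ε : ℝ) (hε : 0 < ε) :
    (A.card : ℝ) ^ t / 2 ≤ (((Fintype.piFinset (fun _ : Fin t => A)).filter fun g =>
      ((apBad A B ε g).card : ℝ) ≤ 4 * ((A + B).card * Real.exp (-2 * ε ^ 2 * t))).card : ℝ) := by
  have hT : ((Fintype.piFinset (fun _ : Fin t => A)).card : ℝ) = (A.card : ℝ) ^ t := by simp
  have htail := fun y => ap_tail2 A B hA t y ε hε
  have hTm : ∀ g ∈ Fintype.piFinset (fun _ : Fin t => A), apBad A B ε g ⊆ A + B :=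
    fun g hg => ap_bad_subset A B ε hε g (Fintype.mem_piFinset.1 hg)
  set T := Fintype.piFinset (fun _ : Fin t => A)
  set E := Real.exp (-2 * ε ^ 2 * t)
  have hE : 0 < E := Real.exp_pos _
  set M : ℝ := (A + B).card * E
  have hM0 : 0 ≤ M := by positivity
  have hsum : ∑ g ∈ T, ((apBad A B ε g).card : ℝ) ≤ 2 * M * A.card ^ t := by
    have e : ∑ g ∈ T, ((apBad A B ε g).card : ℝ)
        = ∑ y ∈ A + B, ((T.filter fun g => y ∈ apBad A B ε g).card : ℝ) := by
      simp only [Finset.card_eq_sum_ones, Finset.sum_filter, Nat.cast_sum]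
      rw [Finset.sum_comm]
      apply Finset.sum_congr rfl
      intro g hg
      rw [← Finset.sum_filter_add_sum_filter_not (A + B) (fun y => y ∈ apBad A B ε g)]
      have : (A + B).filter (fun y => y ∈ apBad A B ε g) = apBad A B ε g := by
        ext y
        simp only [Finset.mem_filter]
        exact ⟨fun h => h.2, fun h => ⟨hTm g hg h, h⟩⟩
      rw [this]
      have h0 : ∑ y ∈ (A + B) with y ∉ apBad A B ε g,
          (((if y ∈ apBad A B ε g then 1 else 0 : ℕ)) : ℝ) = 0 := by
        apply Finset.sum_eq_zero
        intro y hy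
        simp [(Finset.mem_filter.1 hy).2]
      rw [h0, add_zero]
      apply Finset.sum_congr rfl
      intro y hy
      simp [hy]
    rw [e]
    refine (Finset.sum_le_sum fun y _ => htail y).trans ?_
    rw [Finset.sum_const, nsmul_eq_mul]
    apply le_of_eq; simp only [M]; ring
  have hsplit := Finset.card_filter_add_card_filter_not (s := T)
    (fun g => ((apBad A B ε g).card : ℝ) ≤ 4 * M)
  have hsplit' : ((T.filter fun g => ((apBad A B ε g).card : ℝ) ≤ 4 * M).card : ℝ)
    + (T.filter fun g => ¬ ((apBad A B ε g).card : ℝ) ≤ 4 * M).card = A.card ^ t := by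
    rw [← hT]; exact_mod_cast hsplit
  have hpos : (0:ℝ) ≤ A.card ^ t := by positivity
  rcases hM0.eq_or_lt with h | h
  · have : T.filter (fun g => ¬ ((apBad A B ε g).card : ℝ) ≤ 4 * M) = ∅ := by
      apply Finset.filter_false_of_mem
      intro g hg hn
      have := Finset.single_le_sum (f := fun g => ((apBad A B ε g).card : ℝ))
        (fun _ _ => Nat.cast_nonneg _) hg
      rw [← h] at hsum hn
      apply hn
      linarith
    rw [this] at hsplit'
    simp only [Finset.card_empty, Nat.cast_zero, add_zero] at hsplit'
    linarith
  · have hm : ((T.filter fun g => ¬ ((apBad A B ε g).card : ℝ) ≤ 4 * M).card : ℝ) * (4 * M)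
        ≤ ∑ g ∈ T, ((apBad A B ε g).card : ℝ) := by
      rw [← nsmul_eq_mul, ← Finset.sum_const]
      refine le_trans (Finset.sum_le_sum (g := fun g => ((apBad A B ε g).card : ℝ)) ?_)
        (Finset.sum_le_sum_of_subset_of_nonneg (Finset.filter_subset _ _)
          fun _ _ _ => Nat.cast_nonneg _)
      intro g hg
      exact (not_le.1 (Finset.mem_filter.1 hg).2).le
    have : ((T.filter fun g => ¬ ((apBad A B ε g).card : ℝ) ≤ 4 * M).card : ℝ)
        ≤ A.card ^ t / 2 := by
      have h3 := hm.trans hsum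
      refine le_of_mul_le_mul_right (h3.trans (le_of_eq ?_)) (by linarith : 0 < 4 * M)
      ring
    linarith

end

theorem almost_periodicity_of_sumsets {n : ℕ} (K : ℝ) (hK : 1 ≤ K)
    (A : Finset (Fin n → ZMod 2)) (hA : A.Nonempty)
    (hdoub : ((A + A).card : ℝ) ≤ K * A.card)
    (ε : ℝ) (hε : 0 < ε) (t : ℕ) (ht : 0 < t) (B : Finset (Fin n → ZMod 2)) :
    ∃ X : Finset (Fin n → ZMod 2),
      (∃ c : Fin n → ZMod 2, X ⊆ A.image (fun a => c + a)) ∧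
      (A.card : ℝ) / (2 * K ^ (t - 1)) ≤ X.card ∧
      ∀ x ∈ X, ∀ S : Finset (Fin n → ZMod 2), S.Nonempty →
        1 - 8 * (((A + B).card : ℝ) / S.card) * Real.exp (-2 * ε ^ 2 * t) ≤
          prOver S (fun y => |rhoMeas A B y - rhoMeas A B (y + x)| ≤ 2 * ε) := by
  have hgood := ap_good A B hA t ε hε
  have hc : (0:ℝ) < A.card := by exact_mod_cast hA.card_pos
  have hKm : ∀ m : ℕ, 0 < K ^ m := fun m => by positivity
  obtain ⟨m, rfl⟩ : ∃ m, t = m + 1 := ⟨t - 1, by omega⟩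
  simp only [Nat.add_sub_cancel]
  set E := Real.exp (-2 * ε ^ 2 * ((m + 1 : ℕ) : ℝ))
  set M : ℝ := (A + B).card * E with hM
  set G := (Fintype.piFinset (fun _ : Fin (m + 1) => A)).filter fun g =>
      ((apBad A B ε g).card : ℝ) ≤ 4 * M with hG
  let φ : (Fin (m + 1) → Fin n → ZMod 2) → (Fin m → Fin n → ZMod 2) :=
    fun g j => g j.succ + g 0
  have hGA : ∀ g ∈ G, ∀ i, g i ∈ A := fun g hg =>
    Fintype.mem_piFinset.1 (Finset.mem_filter.1 hg).1
  have hmaps : ∀ g ∈ G, φ g ∈ Fintype.piFinset (fun _ : Fin m => A + A) := by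
    intro g hg
    rw [Fintype.mem_piFinset]
    intro j
    exact Finset.add_mem_add (hGA g hg _) (hGA g hg _)
  have hne : (Fintype.piFinset (fun _ : Fin m => A + A)).Nonempty := by
    rw [Fintype.piFinset_nonempty]
    intro _
    exact hA.add hA
  obtain ⟨d, -, hd⟩ := Finset.exists_le_card_fiber_of_nsmul_le_card_of_maps_to
    (b := (A.card : ℝ) / (2 * K ^ m)) hmaps hne (by
      rw [nsmul_eq_mul]
      refine le_trans ?_ hgood
      rw [Fintype.card_piFinset, Finset.prod_const, Finset.card_univ, Fintype.card_fin]
      push_cast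
      have := pow_le_pow_left₀ (Nat.cast_nonneg _) hdoub m
      calc ((A + A).card : ℝ) ^ m * ((A.card : ℝ) / (2 * K ^ m))
          ≤ (K * A.card) ^ m * ((A.card : ℝ) / (2 * K ^ m)) := by gcongr
        _ = (A.card : ℝ) ^ (m + 1) / 2 := by
          have := hKm m
          rw [mul_pow, pow_succ]; field_simp)
  set F := G.filter fun g => φ g = d with hF
  have hFpos : (0:ℝ) < F.card := lt_of_lt_of_le (by have := hKm m; positivity) hd
  obtain ⟨g0, hg0⟩ : F.Nonempty := Finset.card_pos.1 (by exact_mod_cast hFpos)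
  have hFG : ∀ g ∈ F, g ∈ G := fun g hg => (Finset.mem_filter.1 hg).1
  have hdiff : ∀ g ∈ F, ∀ h ∈ F, ∀ i, g i = h i + (g 0 + h 0) := by
    intro g hg h hh i
    have e : φ g = φ h := (Finset.mem_filter.1 hg).2.trans (Finset.mem_filter.1 hh).2.symm
    refine Fin.cases ?_ (fun j => ?_) i
    · rw [add_comm (g 0), ← add_assoc, ap_add_self, zero_add]
    · have := congrFun e j
      simp only [φ] at this
      calc g j.succ = (g j.succ + g 0) + g 0 := by rw [add_assoc, ap_add_self, add_zero]
        _ = _ := by rw [this]; abel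
  refine ⟨F.image fun g => g0 0 + g 0, ⟨g0 0, ?_⟩, ?_, ?_⟩
  · intro x hx
    obtain ⟨g, hg, rfl⟩ := Finset.mem_image.1 hx
    exact Finset.mem_image.2 ⟨g 0, hGA g (hFG g hg) 0, rfl⟩
  · rw [Finset.card_image_of_injOn]
    · exact hd
    · intro g hg h hh hgh
      have h0 : g 0 = h 0 := add_left_cancel hgh
      funext i
      rw [hdiff g hg h hh i, h0, ap_add_self, add_zero]
  · intro x hx S hS
    obtain ⟨g, hg, rfl⟩ := Finset.mem_image.1 hx
    set x := g0 0 + g 0 with hxdef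
    have hgi : ∀ i, g i = x + g0 i := by
      intro i; rw [hdiff g hg g0 hg0 i, hxdef]; abel
    have hbg := (Finset.mem_filter.1 (hFG g hg)).2
    have hbg0 := (Finset.mem_filter.1 (hFG g0 hg0)).2
    have hSc : (0:ℝ) < S.card := by exact_mod_cast hS.card_pos
    have hkey : ∀ y, apDev A B g y - apDev A B g0 (y + x)
        = ((m + 1 : ℕ) : ℝ) * (rhoMeas A B (y + x) - rhoMeas A B y) := by
      intro y
      rw [apDev, apDev, ← Finset.sum_sub_distrib]
      have : ∀ i ∈ Finset.univ, apF A B y (g i) - apF A B (y + x) (g0 i)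
          = rhoMeas A B (y + x) - rhoMeas A B y := by
        intro i _
        rw [apF, apF, hgi i, add_assoc y x (g0 i)]; ring
      rw [Finset.sum_congr rfl this, Finset.sum_const, nsmul_eq_mul, Finset.card_univ, Fintype.card_fin]
    have hsub : (S.filter fun y => ¬ |rhoMeas A B y - rhoMeas A B (y + x)| ≤ 2 * ε) ⊆
        apBad A B ε g ∪ (apBad A B ε g0).image (fun y => y + x) := by
      intro y hy
      have hy2 := (Finset.mem_filter.1 hy).2
      by_contra hn
      rw [Finset.mem_union, not_or] at hn
      obtain ⟨h1, h2⟩ := hn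
      have h2' : y + x ∉ apBad A B ε g0 := fun h =>
        h2 (Finset.mem_image.2 ⟨y + x, h, by
          show y + x + x = y
          rw [add_assoc, ap_add_self, add_zero]⟩)
      simp only [apBad, Finset.mem_filter, Finset.mem_univ, true_and, not_lt] at h1 h2'
      apply hy2
      have htp : (0:ℝ) < ((m + 1 : ℕ) : ℝ) := by positivity
      have h3 := abs_sub (apDev A B g y) (apDev A B g0 (y + x))
      rw [hkey y, abs_mul, abs_of_pos htp, abs_sub_comm] at h3
      refine le_of_mul_le_mul_left ?_ htp
      linarith
    have hcard : ((S.filter fun y => ¬ |rhoMeas A B y - rhoMeas A B (y + x)| ≤ 2 * ε).card : ℝ)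
        ≤ 8 * M := by
      have h1 := (Finset.card_le_card hsub).trans (Finset.card_union_le _ _)
      have h2 : ((apBad A B ε g0).image (fun y => y + x)).card ≤ _ := Finset.card_image_le
      have h3 : ((S.filter fun y => ¬ |rhoMeas A B y - rhoMeas A B (y + x)| ≤ 2 * ε).card : ℝ)
        ≤ (apBad A B ε g).card + (apBad A B ε g0).card := by exact_mod_cast h1.trans (by omega)
      linarith
    have hsplit := Finset.card_filter_add_card_filter_not (s := S)
      (fun y => |rhoMeas A B y - rhoMeas A B (y + x)| ≤ 2 * ε)
    have hsplit' : ((S.filter fun y => |rhoMeas A B y - rhoMeas A B (y + x)| ≤ 2 * ε).card : ℝ)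
      + (S.filter fun y => ¬ |rhoMeas A B y - rhoMeas A B (y + x)| ≤ 2 * ε).card = S.card := by
      exact_mod_cast hsplit
    rw [prOver, le_div_iff₀ hSc]
    have : (1 - 8 * (((A + B).card : ℝ) / S.card) * E) * S.card = S.card - 8 * M := by
      have e : ((A + B).card : ℝ) / S.card * S.card = (A + B).card := div_mul_cancel₀ _ hSc.ne'
      rw [hM]
      calc _ = (S.card : ℝ) - 8 * ((((A + B).card : ℝ) / S.card * S.card) * E) := by ring
        _ = _ := by rw [e]
    rw [this]
    linarith
end

section
/- Let ε, δ > 0, let ℓ be a positive integer, and let A, B, X, S ⊆ F_2^n with A, X, S nonempty, be such that for all x₁, …, x_ℓ ∈ X, Pr_{y∈S}[ |ρ_{A→B}(y) − ρ_{A→B}(y + x₁ + ⋯ + x_ℓ)| ≤ ε ] ≥ 1 − δ. Then for every η > 0, Pr_{y∈S}[ |ρ_{A→B}(y) − E_{x₁,…,x_ℓ∈X}[ρ_{A→B}(y + x₁ + ⋯ + x_ℓ)]| ≤ ε + η ] ≥ 1 − δ/η, where the expectation is over x₁, …, x_ℓ drawn independently and uniformly from X. -/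
open scoped Classical

/-- Expectation of `F(x₁, …, x_ℓ)` over `x₁, …, x_ℓ` drawn independently and
uniformly from `X`. -/
noncomputable def expTuples {n : ℕ} (X : Finset (Fin n → ZMod 2)) (ℓ : ℕ)
    (F : (Fin ℓ → (Fin n → ZMod 2)) → ℝ) : ℝ :=
  (∑ x ∈ Fintype.piFinset fun _ : Fin ℓ => X, F x) / (X.card : ℝ) ^ ℓ

theorem rhoMeas_nonneg_aux {n : ℕ} (A B : Finset (Fin n → ZMod 2)) (y : Fin n → ZMod 2) :
    0 ≤ rhoMeas A B y := by
  unfold rhoMeas; positivity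

theorem rhoMeas_le_one_aux {n : ℕ} (A B : Finset (Fin n → ZMod 2)) (y : Fin n → ZMod 2) :
    rhoMeas A B y ≤ 1 := by
  unfold rhoMeas
  apply div_le_one_of_le₀ _ (by positivity)
  exact_mod_cast Finset.card_filter_le _ _

theorem prOver_compl_aux {n : ℕ} (S : Finset (Fin n → ZMod 2)) (hS : S.Nonempty)
    (P : (Fin n → ZMod 2) → Prop) (t : ℝ) :
    1 - t ≤ prOver S P ↔ (∑ y ∈ S, if P y then (0:ℝ) else 1) ≤ t * S.card := by
  have hc : (0:ℝ) < S.card := by exact_mod_cast hS.card_pos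
  have h1 : (∑ y ∈ S, if P y then (0:ℝ) else 1) = S.card - (S.filter fun y => P y).card := by
    have : ((S.filter fun y => P y).card : ℝ) = ∑ y ∈ S, if P y then (1:ℝ) else 0 := by
      simp
    rw [this, eq_sub_iff_add_eq, ← Finset.sum_add_distrib]
    have h2 : ∀ y ∈ S, ((if P y then (0:ℝ) else 1) + if P y then (1:ℝ) else 0) = 1 := by
      intro y _; split_ifs <;> norm_num
    rw [Finset.sum_congr rfl h2]; simp
  unfold prOver
  rw [h1, le_div_iff₀ hc]
  constructor <;> intro h <;> nlinarith

theorem subspace_averaging {n : ℕ} (ε δ : ℝ) (hε : 0 < ε) (hδ : 0 < δ)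
    (ℓ : ℕ) (hℓ : 0 < ℓ)
    (A B X S : Finset (Fin n → ZMod 2)) (hA : A.Nonempty) (hX : X.Nonempty)
    (hS : S.Nonempty)
    (hyp : ∀ x : Fin ℓ → (Fin n → ZMod 2), (∀ i, x i ∈ X) →
      1 - δ ≤ prOver S (fun y => |rhoMeas A B y - rhoMeas A B (y + ∑ i, x i)| ≤ ε)) :
    ∀ η : ℝ, 0 < η →
      1 - δ / η ≤ prOver S (fun y =>
        |rhoMeas A B y -
            expTuples X ℓ (fun x => rhoMeas A B (y + ∑ i, x i))| ≤ ε + η) := by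
  intro η hη
  have hc : (0:ℝ) < S.card := by exact_mod_cast hS.card_pos
  have hXc : (0:ℝ) < X.card := by exact_mod_cast hX.card_pos
  set T := Fintype.piFinset fun _ : Fin ℓ => X with hT
  have hTc : ((T.card : ℕ) : ℝ) = (X.card : ℝ) ^ ℓ := by
    simp [hT]
  have hN : (0:ℝ) < (X.card : ℝ) ^ ℓ := by positivity
  rw [prOver_compl_aux S hS]
  set bad : (Fin ℓ → (Fin n → ZMod 2)) → (Fin n → ZMod 2) → ℝ := fun x y =>
    if |rhoMeas A B y - rhoMeas A B (y + ∑ i, x i)| ≤ ε then (0:ℝ) else 1 with hbad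
  have hbad0 : ∀ x y, 0 ≤ bad x y := by
    intro x y; simp only [hbad]; split_ifs <;> norm_num
  have h1 : ∀ x ∈ T, ∑ y ∈ S, bad x y ≤ δ * S.card := by
    intro x hx
    exact (prOver_compl_aux S hS _ δ).1 (hyp x (by simpa [hT] using hx))
  have h2 : ∑ y ∈ S, ∑ x ∈ T, bad x y ≤ (X.card : ℝ) ^ ℓ * (δ * S.card) := by
    rw [Finset.sum_comm]
    refine (Finset.sum_le_sum h1).trans ?_
    rw [Finset.sum_const, nsmul_eq_mul, hTc]
  have h3 : ∀ y, |rhoMeas A B y - expTuples X ℓ (fun x => rhoMeas A B (y + ∑ i, x i))|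
      * (X.card : ℝ) ^ ℓ ≤ ε * (X.card : ℝ) ^ ℓ + ∑ x ∈ T, bad x y := by
    intro y
    have e : |rhoMeas A B y - expTuples X ℓ (fun x => rhoMeas A B (y + ∑ i, x i))|
      * (X.card : ℝ) ^ ℓ = |∑ x ∈ T, (rhoMeas A B y - rhoMeas A B (y + ∑ i, x i))| := by
      rw [← abs_of_pos hN, ← abs_mul, sub_mul]
      unfold expTuples
      rw [div_mul_cancel₀ _ hN.ne', Finset.sum_sub_distrib, Finset.sum_const, nsmul_eq_mul,
        hTc, mul_comm]
    rw [e]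
    refine (Finset.abs_sum_le_sum_abs _ _).trans ?_
    have e2 : ε * (X.card : ℝ) ^ ℓ + ∑ x ∈ T, bad x y = ∑ x ∈ T, (ε + bad x y) := by
      rw [Finset.sum_add_distrib, Finset.sum_const, nsmul_eq_mul, hTc, mul_comm]
    rw [e2]
    refine Finset.sum_le_sum fun x _ => ?_
    simp only [hbad]
    split_ifs with h
    · linarith
    · have a1 := rhoMeas_nonneg_aux A B y
      have a2 := rhoMeas_le_one_aux A B y
      have a3 := rhoMeas_nonneg_aux A B (y + ∑ i, x i)
      have a4 := rhoMeas_le_one_aux A B (y + ∑ i, x i)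
      rw [abs_le]; constructor <;> linarith
  have h4 : (∑ y ∈ S, if |rhoMeas A B y -
      expTuples X ℓ (fun x => rhoMeas A B (y + ∑ i, x i))| ≤ ε + η then (0:ℝ) else 1)
      * (η * (X.card : ℝ) ^ ℓ) ≤ ∑ y ∈ S, ∑ x ∈ T, bad x y := by
    rw [Finset.sum_mul]
    refine Finset.sum_le_sum fun y _ => ?_
    split_ifs with h
    · rw [zero_mul]; exact Finset.sum_nonneg fun x _ => hbad0 x y
    · push Not at h
      have := h3 y
      nlinarith [mul_lt_mul_of_pos_right h hN]
  have h5 := h4.trans h2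
  rw [div_mul_eq_mul_div, le_div_iff₀ hη]
  refine le_of_mul_le_mul_right ?_ hN
  linarith
end
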